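/- arXiv:2507.02540 — 5 statements merged into one kernel-verified Lean document; each statement's English description precedes it below -/
import Mathlib

section
/- The Pauli twirling channel prepares the maximally mixed state: for every natural number n and every matrix M indexed by (Fin n → Fin 2) with complex entries, d⁻² • (Σ over all s : Fin n → Fin 4 of P_s * M * P_s) = (M.trace / d) • 1, where d = 2^n. -/
open Complex Matrix BigOperators

/-- The single-qubit Pauli matrices `Q₀ = 1`, `Q₁ = X`, `Q₂ = Y`, `Q₃ = Z`. -/
noncomputable def Q : Fin 4 → Matrix (Fin 2) (Fin 2) ℂ :=
  ![1, !![0, 1; 1, 0], !![0, -Complex.I; Complex.I, 0], !![1, 0; 0, -1]]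

/-- The `n`-qubit Pauli string `P_s`, the Kronecker product of the `Q (s k)`. -/
noncomputable def P {n : ℕ} (s : Fin n → Fin 4) :
    Matrix (Fin n → Fin 2) (Fin n → Fin 2) ℂ :=
  Matrix.of fun i j => ∏ k, Q (s k) (i k) (j k)

theorem Q_sum (a b c e : Fin 2) :
    ∑ t : Fin 4, Q t a b * Q t c e = if a = e ∧ b = c then 2 else 0 := by
  fin_cases a <;> fin_cases b <;> fin_cases c <;> fin_cases e <;>
    simp [Q, Fin.sum_univ_four] <;> norm_num

theorem P_sum {n : ℕ} (i b c j : Fin n → Fin 2) :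
    ∑ s : Fin n → Fin 4, P s i b * P s c j = if i = j ∧ b = c then 2 ^ n else 0 := by
  have h : ∑ s : Fin n → Fin 4, P s i b * P s c j
      = ∏ k, ∑ t : Fin 4, Q t (i k) (b k) * Q t (c k) (j k) := by
    rw [Fintype.prod_sum]
    simp [P, Finset.prod_mul_distrib]
  rw [h]
  simp_rw [Q_sum]
  split_ifs with hc
  · obtain ⟨rfl, rfl⟩ := hc
    simp
  · have : ∃ k, ¬ (i k = j k ∧ b k = c k) := by
      by_contra! hk
      exact hc ⟨funext fun k => (hk k).1, funext fun k => (hk k).2⟩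
    obtain ⟨k, hk⟩ := this
    exact Finset.prod_eq_zero (Finset.mem_univ k) (by simp [hk])

theorem pauli_twirl (n : ℕ) (M : Matrix (Fin n → Fin 2) (Fin n → Fin 2) ℂ) :
    ((2 ^ n : ℂ) ^ 2)⁻¹ • ∑ s : Fin n → Fin 4, P s * M * P s
      = (M.trace / (2 ^ n : ℂ)) • (1 : Matrix (Fin n → Fin 2) (Fin n → Fin 2) ℂ) := by
  have h2 : (2 ^ n : ℂ) ≠ 0 := pow_ne_zero n two_ne_zero
  have key : ∑ s : Fin n → Fin 4, P s * M * P s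
      = ((2 ^ n : ℂ) * M.trace) • (1 : Matrix (Fin n → Fin 2) (Fin n → Fin 2) ℂ) := by
    ext i j
    have h : (∑ s : Fin n → Fin 4, P s * M * P s) i j
        = ∑ c, ∑ b, M b c * ∑ s : Fin n → Fin 4, P s i b * P s c j := by
      simp only [Matrix.sum_apply, Matrix.mul_apply, Finset.sum_mul, Finset.mul_sum]
      rw [Finset.sum_comm]
      refine Finset.sum_congr rfl fun c _ => ?_
      rw [Finset.sum_comm]
      refine Finset.sum_congr rfl fun b _ => Finset.sum_congr rfl fun s _ => ?_
      ring
    rw [h]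
    simp_rw [P_sum]
    by_cases hij : i = j
    · subst hij
      simp [Matrix.trace, Finset.mul_sum, mul_comm]
    · simp [hij]
  rw [key, smul_smul]
  congr 1
  field_simp
end

section
/- Double-sum reduction for the stabilizer Rényi quantity: for every natural number n, every integer α ≥ 1, and every unit vector ψ : (Fin n → Fin 2) → ℂ, one has d⁻⁴ · Σ over all pairs s, t : Fin n → Fin 4 of ‖⟨ψ, (P_s * P_t) ψ⟩‖^(2α) = d⁻¹ · A_α(ψ), where ‖·‖ denotes the complex absolute value, ⟨ψ, M ψ⟩ = star ψ ⬝ᵥ M.mulVec ψ, and d = 2^n. -/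
open Complex Matrix BigOperators

/-- `A_α(ψ) = d⁻¹ ∑_s ⟨ψ, P_s ψ⟩^(2α)` with `d = 2^n`. -/
noncomputable def A (n α : ℕ) (ψ : (Fin n → Fin 2) → ℂ) : ℝ :=
  (2 ^ n : ℝ)⁻¹ * ∑ s : Fin n → Fin 4, (star ψ ⬝ᵥ (P s).mulVec ψ).re ^ (2 * α)

/-- Multiplication table of the Pauli matrices up to phases. -/
def pauliOp : Fin 4 → Fin 4 → Fin 4 :=
  ![![0, 1, 2, 3], ![1, 0, 3, 2], ![2, 3, 0, 1], ![3, 2, 1, 0]]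

theorem pauliOp_invol : ∀ a b, pauliOp a (pauliOp a b) = b := by decide

/-- The phases in the multiplication table. -/
noncomputable def pauliPhase : Fin 4 → Fin 4 → ℂ :=
  ![![1, 1, 1, 1], ![1, 1, I, -I], ![1, -I, 1, I], ![1, I, -I, 1]]

theorem pauliPhase_norm (a b : Fin 4) : ‖pauliPhase a b‖ = 1 := by
  fin_cases a <;> fin_cases b <;> simp [pauliPhase]

theorem Q_mul (a b : Fin 4) (i j : Fin 2) :
    ∑ l, Q a i l * Q b l j = pauliPhase a b * Q (pauliOp a b) i j := by
  fin_cases a <;> fin_cases b <;> fin_cases i <;> fin_cases j <;>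
    simp [Q, pauliPhase, pauliOp, Fin.sum_univ_two]

theorem Q_herm (a : Fin 4) (i j : Fin 2) : star (Q a i j) = Q a j i := by
  fin_cases a <;> fin_cases i <;> fin_cases j <;> simp [Q]

theorem P_mul {n : ℕ} (s t : Fin n → Fin 4) :
    P s * P t = (∏ k, pauliPhase (s k) (t k)) • P (fun k => pauliOp (s k) (t k)) := by
  ext i j
  simp only [Matrix.mul_apply, P, Matrix.of_apply, Matrix.smul_apply, smul_eq_mul,
    ← Finset.prod_mul_distrib, ← Q_mul]
  rw [Finset.prod_univ_sum, Fintype.piFinset_univ]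

theorem P_herm {n : ℕ} (s : Fin n → Fin 4) : (P s).IsHermitian := by
  ext i j
  simp only [P, Matrix.conjTranspose_apply, Matrix.of_apply, star_prod, Q_herm]

theorem norm_expect {n : ℕ} (s : Fin n → Fin 4) (ψ : (Fin n → Fin 2) → ℂ) (α : ℕ) :
    ‖star ψ ⬝ᵥ (P s).mulVec ψ‖ ^ (2 * α) = (star ψ ⬝ᵥ (P s).mulVec ψ).re ^ (2 * α) := by
  have h : (star ψ ⬝ᵥ (P s).mulVec ψ).im = 0 := (P_herm s).im_star_dotProduct_mulVec_self ψ
  rw [pow_mul, pow_mul, Complex.sq_norm, Complex.normSq_apply, h]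
  ring

theorem double_sum_reduction (n α : ℕ) (hα : 1 ≤ α) (ψ : (Fin n → Fin 2) → ℂ)
    (hψ : star ψ ⬝ᵥ ψ = 1) :
    ((2 ^ n : ℝ) ^ 4)⁻¹ * ∑ s : Fin n → Fin 4, ∑ t : Fin n → Fin 4,
        ‖star ψ ⬝ᵥ (P s * P t).mulVec ψ‖ ^ (2 * α)
      = (2 ^ n : ℝ)⁻¹ * A n α ψ := by
  have key : ∀ s : Fin n → Fin 4, ∑ t : Fin n → Fin 4,
      ‖star ψ ⬝ᵥ (P s * P t).mulVec ψ‖ ^ (2 * α)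
      = ∑ t : Fin n → Fin 4, (star ψ ⬝ᵥ (P t).mulVec ψ).re ^ (2 * α) := by
    intro s
    have hinv : Function.Involutive
        (fun (t : Fin n → Fin 4) => fun k => pauliOp (s k) (t k)) := by
      intro t
      funext k
      exact pauliOp_invol _ _
    refine Fintype.sum_bijective _ hinv.bijective _ _ ?_
    intro t
    rw [P_mul, Matrix.smul_mulVec, dotProduct_smul, norm_smul, norm_prod]
    simp only [pauliPhase_norm, Finset.prod_const_one, one_mul]
    exact norm_expect _ _ _
  simp only [key, Finset.sum_const, Finset.card_univ, Fintype.card_fun, Fintype.card_fin,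
    nsmul_eq_mul, A]
  have h4 : (((4 ^ n : ℕ)) : ℝ) = (2 ^ n) ^ 2 := by
    push_cast
    rw [← pow_mul, mul_comm n 2, pow_mul]
    norm_num
  rw [h4]
  field_simp
end

section
/- Each single-copy marginal of the channel output is maximally mixed: for every natural number n, every natural number α' and α = α' + 1, and every unit vector ψ : (Fin n → Fin 2) → ℂ, the matrix σ indexed by (Fin n → Fin 2) with entries σ b b' = Σ over all g : Fin α' → (Fin n → Fin 2) of ρ_α (Fin.cons b g) (Fin.cons b' g) equals (d⁻¹ : ℂ) • 1, where d = 2^n. -/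
open Complex Matrix BigOperators

/-- The channel output `E_P^α(|ψ⟩⟨ψ|^⊗α)`: each Pauli string applied with probability `d⁻²`
simultaneously to all `α` copies of `ψ`. -/
noncomputable def rho (n α : ℕ) (ψ : (Fin n → Fin 2) → ℂ) :
    Matrix (Fin α → Fin n → Fin 2) (Fin α → Fin n → Fin 2) ℂ :=
  Matrix.of fun f g => ((2 ^ n : ℂ) ^ 2)⁻¹ *
    ∑ s : Fin n → Fin 4, ∏ m, ((P s).mulVec ψ (f m) * (starRingEnd ℂ) ((P s).mulVec ψ (g m)))


lemma Q_complete (a b c e : Fin 2) :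
    ∑ t, Q t a c * (starRingEnd ℂ) (Q t b e) = if a = b ∧ c = e then 2 else 0 := by
  fin_cases a <;> fin_cases b <;> fin_cases c <;> fin_cases e <;>
    simp [Q, Fin.sum_univ_four] <;> norm_num

lemma Q_unitary (t : Fin 4) (c e : Fin 2) :
    ∑ x, Q t x c * (starRingEnd ℂ) (Q t x e) = if c = e then 1 else 0 := by
  fin_cases t <;> fin_cases c <;> fin_cases e <;> simp [Q]

lemma P_complete {n : ℕ} (b b' j j' : Fin n → Fin 2) :
    ∑ s : Fin n → Fin 4, P s b j * (starRingEnd ℂ) (P s b' j')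
      = if b = b' ∧ j = j' then 2 ^ n else 0 := by
  have h := Finset.prod_univ_sum (fun _ : Fin n => (Finset.univ : Finset (Fin 4)))
    (fun k t => Q t (b k) (j k) * (starRingEnd ℂ) (Q t (b' k) (j' k)))
  simp only [Fintype.piFinset_univ] at h
  simp only [P, Matrix.of_apply, map_prod, ← Finset.prod_mul_distrib]
  rw [← h]
  simp only [Q_complete]
  split_ifs with hh
  · obtain ⟨rfl, rfl⟩ := hh
    simp
  · have : ∃ k, ¬ (b k = b' k ∧ j k = j' k) := by
      by_contra hc
      push Not at hc
      exact hh ⟨funext fun k => (hc k).1, funext fun k => (hc k).2⟩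
    obtain ⟨k, hk⟩ := this
    exact Finset.prod_eq_zero (Finset.mem_univ k) (if_neg hk)

lemma P_unitary {n : ℕ} (s : Fin n → Fin 4) (j j' : Fin n → Fin 2) :
    ∑ x, P s x j * (starRingEnd ℂ) (P s x j') = if j = j' then 1 else 0 := by
  have h := Finset.prod_univ_sum (fun _ : Fin n => (Finset.univ : Finset (Fin 2)))
    (fun k t => Q (s k) t (j k) * (starRingEnd ℂ) (Q (s k) t (j' k)))
  simp only [Fintype.piFinset_univ] at h
  simp only [P, Matrix.of_apply, map_prod, ← Finset.prod_mul_distrib]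
  rw [← h]
  simp only [Q_unitary]
  split_ifs with hh
  · subst hh
    simp
  · obtain ⟨k, hk⟩ := Function.ne_iff.mp hh
    exact Finset.prod_eq_zero (Finset.mem_univ k) (if_neg hk)

lemma mulVec_expand {n : ℕ} (s : Fin n → Fin 4) (ψ : (Fin n → Fin 2) → ℂ)
    (b b' : Fin n → Fin 2) :
    (P s).mulVec ψ b * (starRingEnd ℂ) ((P s).mulVec ψ b')
      = ∑ j, ∑ j', (P s b j * (starRingEnd ℂ) (P s b' j')) * (ψ j * (starRingEnd ℂ) (ψ j')) := by
  simp only [Matrix.mulVec, dotProduct, map_sum, map_mul, Finset.sum_mul_sum]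
  exact Finset.sum_congr rfl fun j _ => Finset.sum_congr rfl fun j' _ => by ring

lemma norm_sum {n : ℕ} {ψ : (Fin n → Fin 2) → ℂ} (hψ : star ψ ⬝ᵥ ψ = 1) :
    ∑ j, ψ j * (starRingEnd ℂ) (ψ j) = 1 := by
  rw [← hψ]
  exact Finset.sum_congr rfl fun j _ => mul_comm _ _

lemma P_norm {n : ℕ} (s : Fin n → Fin 4) {ψ : (Fin n → Fin 2) → ℂ} (hψ : star ψ ⬝ᵥ ψ = 1) :
    ∑ x, (P s).mulVec ψ x * (starRingEnd ℂ) ((P s).mulVec ψ x) = 1 := by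
  simp only [mulVec_expand]
  rw [Finset.sum_comm, ← norm_sum hψ]
  refine Finset.sum_congr rfl fun j _ => ?_
  rw [Finset.sum_comm]
  simp [← Finset.sum_mul, P_unitary]

lemma P_twirl {n : ℕ} {ψ : (Fin n → Fin 2) → ℂ} (hψ : star ψ ⬝ᵥ ψ = 1)
    (b b' : Fin n → Fin 2) :
    ∑ s, (P s).mulVec ψ b * (starRingEnd ℂ) ((P s).mulVec ψ b')
      = if b = b' then 2 ^ n else 0 := by
  simp only [mulVec_expand]
  rw [Finset.sum_comm]
  have : ∀ j, ∑ s : Fin n → Fin 4, ∑ j',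
      (P s b j * (starRingEnd ℂ) (P s b' j')) * (ψ j * (starRingEnd ℂ) (ψ j'))
      = (if b = b' then 2 ^ n else 0) * (ψ j * (starRingEnd ℂ) (ψ j)) := by
    intro j
    rw [Finset.sum_comm]
    by_cases h : b = b' <;> simp [← Finset.sum_mul, P_complete, h]
  simp only [this]
  rw [← Finset.mul_sum, norm_sum hψ, mul_one]

theorem single_copy_marginal_maximally_mixed (n α' : ℕ) (ψ : (Fin n → Fin 2) → ℂ)
    (hψ : star ψ ⬝ᵥ ψ = 1) :
    (Matrix.of fun b b' : Fin n → Fin 2 =>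
        ∑ g : Fin α' → Fin n → Fin 2,
          rho n (α' + 1) ψ (Fin.cons b g) (Fin.cons b' g))
      = ((2 ^ n : ℂ))⁻¹ • (1 : Matrix (Fin n → Fin 2) (Fin n → Fin 2) ℂ) := by
  ext b b'
  simp only [Matrix.of_apply, rho, Fin.prod_univ_succ, Fin.cons_zero, Fin.cons_succ,
    Matrix.smul_apply, smul_eq_mul]
  rw [← Finset.mul_sum, Finset.sum_comm]
  have key : ∀ s : Fin n → Fin 4, ∑ g : Fin α' → Fin n → Fin 2,
      ∏ m, ((P s).mulVec ψ (g m) * (starRingEnd ℂ) ((P s).mulVec ψ (g m))) = 1 := by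
    intro s
    have h := Finset.prod_univ_sum (fun _ : Fin α' => (Finset.univ : Finset (Fin n → Fin 2)))
      (fun _ x => (P s).mulVec ψ x * (starRingEnd ℂ) ((P s).mulVec ψ x))
    simp only [Fintype.piFinset_univ] at h
    rw [← h]
    simp [P_norm s hψ]
  simp only [← Finset.mul_sum, key, mul_one]
  rw [P_twirl hψ, Matrix.one_apply]
  split_ifs
  · field_simp
  · simp
end

section
/- The maximally mixed state is the unique state with purity d⁻¹: for every nonempty finite type B with cardinality d and every matrix ρ indexed by B with complex entries, if ρ is positive semidefinite, trace(ρ) = 1, and trace(ρ * ρ) = (d : ℂ)⁻¹, then ρ = (d : ℂ)⁻¹ • 1. -/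
open Complex Matrix BigOperators
open scoped ComplexOrder

theorem maximally_mixed_unique_min_purity (B : Type*) [Fintype B] [DecidableEq B] [Nonempty B]
    (ρ : Matrix B B ℂ) (hρ : ρ.PosSemidef) (h1 : ρ.trace = 1)
    (h2 : (ρ * ρ).trace = ((Fintype.card B : ℂ))⁻¹) :
    ρ = ((Fintype.card B : ℂ))⁻¹ • (1 : Matrix B B ℂ) := by
  have hd : (Fintype.card B : ℂ) ≠ 0 := Nat.cast_ne_zero.mpr Fintype.card_ne_zero
  rw [← sub_eq_zero, ← Matrix.trace_conjTranspose_mul_self_eq_zero_iff]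
  have hH : (ρ - ((Fintype.card B : ℂ))⁻¹ • (1 : Matrix B B ℂ))ᴴ
      = ρ - ((Fintype.card B : ℂ))⁻¹ • (1 : Matrix B B ℂ) := by
    rw [conjTranspose_sub, hρ.isHermitian.eq, conjTranspose_smul, conjTranspose_one]
    simp
  rw [hH]
  simp only [sub_mul, mul_sub, Matrix.smul_mul, Matrix.mul_smul, Matrix.one_mul, Matrix.mul_one,
    trace_sub, trace_smul, trace_one, h1, h2, smul_eq_mul]
  field_simp
  ring
end

section
/- Benchmark formula for equatorial qubit states: for every real number θ and every integer α ≥ 1, the single-qubit state ψ_θ : Fin 2 → ℂ with ψ_θ 0 = (Real.sqrt 2)⁻¹ and ψ_θ 1 = (Real.sqrt 2)⁻¹ · Complex.exp (Complex.I * θ) is a unit vector and satisfies A_α(ψ_θ) = (1 + (Real.cos θ)^(2α) + (Real.sin θ)^(2α)) / 2, where A_α is computed with n = 1 and d = 2. -/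
open Complex Matrix BigOperators

theorem benchmark_equatorial_qubit (θ : ℝ) (α : ℕ) (hα : 1 ≤ α) :
    (star (![(((Real.sqrt 2)⁻¹ : ℝ) : ℂ),
          (((Real.sqrt 2)⁻¹ : ℝ) : ℂ) * Complex.exp (Complex.I * θ)] : Fin 2 → ℂ) ⬝ᵥ
        ![(((Real.sqrt 2)⁻¹ : ℝ) : ℂ),
          (((Real.sqrt 2)⁻¹ : ℝ) : ℂ) * Complex.exp (Complex.I * θ)] = 1) ∧
      (2 : ℝ)⁻¹ * ∑ i : Fin 4,
          (star (![(((Real.sqrt 2)⁻¹ : ℝ) : ℂ),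
              (((Real.sqrt 2)⁻¹ : ℝ) : ℂ) * Complex.exp (Complex.I * θ)] : Fin 2 → ℂ) ⬝ᵥ
            (Q i).mulVec ![(((Real.sqrt 2)⁻¹ : ℝ) : ℂ),
              (((Real.sqrt 2)⁻¹ : ℝ) : ℂ) * Complex.exp (Complex.I * θ)]).re ^ (2 * α)
        = (1 + Real.cos θ ^ (2 * α) + Real.sin θ ^ (2 * α)) / 2 := by
  have hr : (Real.sqrt 2)⁻¹ * (Real.sqrt 2)⁻¹ = (1 / 2 : ℝ) := by
    rw [← mul_inv, Real.mul_self_sqrt (by norm_num)]; norm_num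
  have hre : (Complex.exp (Complex.I * θ)).re = Real.cos θ := by
    rw [mul_comm]; exact Complex.exp_ofReal_mul_I_re θ
  have him : (Complex.exp (Complex.I * θ)).im = Real.sin θ := by
    rw [mul_comm]; exact Complex.exp_ofReal_mul_I_im θ
  generalize Complex.exp (Complex.I * θ) = e at *
  generalize (Real.sqrt 2)⁻¹ = r at *
  have hcs := Real.sin_sq_add_cos_sq θ
  generalize Real.cos θ = c at *
  generalize Real.sin θ = s at *
  have hα0 : 2 * α ≠ 0 := by omega
  constructor
  · apply Complex.ext
    · simp [dotProduct, Fin.sum_univ_two, hre, him]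
      linear_combination (1 + c ^ 2 + s ^ 2) * hr + (1 / 2) * hcs
    · simp [dotProduct, Fin.sum_univ_two, hre, him]
      ring
  · have h0 : (star (![(r : ℂ), (r : ℂ) * e] : Fin 2 → ℂ) ⬝ᵥ
        (Q 0).mulVec ![(r : ℂ), (r : ℂ) * e]).re = 1 := by
      simp [Q, dotProduct, Fin.sum_univ_two, hre, him]
      linear_combination (1 + c ^ 2 + s ^ 2) * hr + (1 / 2) * hcs
    have h1 : (star (![(r : ℂ), (r : ℂ) * e] : Fin 2 → ℂ) ⬝ᵥ
        (Q 1).mulVec ![(r : ℂ), (r : ℂ) * e]).re = c := by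
      simp [Q, dotProduct, Matrix.mulVec, Fin.sum_univ_two, hre, him]
      linear_combination (2 * c) * hr
    have h2 : (star (![(r : ℂ), (r : ℂ) * e] : Fin 2 → ℂ) ⬝ᵥ
        (Q 2).mulVec ![(r : ℂ), (r : ℂ) * e]).re = s := by
      simp [Q, dotProduct, Matrix.mulVec, Fin.sum_univ_two, hre, him]
      linear_combination (2 * s) * hr
    have h3 : (star (![(r : ℂ), (r : ℂ) * e] : Fin 2 → ℂ) ⬝ᵥ
        (Q 3).mulVec ![(r : ℂ), (r : ℂ) * e]).re = 0 := by
      simp [Q, dotProduct, Matrix.mulVec, Fin.sum_univ_two, hre, him]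
      linear_combination (1 - c ^ 2 - s ^ 2) * hr - (1 / 2) * hcs
    rw [Fin.sum_univ_four, h0, h1, h2, h3, one_pow, zero_pow hα0]
    ring
end
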